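/- In the symmetric algebra S(gl_n) (polynomial functions on n×n matrices, identified via the trace form), the invariants under the adjoint action of GL_n form a polynomial algebra freely generated by the power traces C_i(A) = Tr(A^i) for i = 1, 2, ..., n. -/

import Mathlib

/-!
Restriction to diagonal matrices (`diagRestrict`) turns the question about `gl_n` into one about
symmetric polynomials in `n` variables: it sends `Tr(A^k)` to the power sum `p_k`, and it sends an
invariant to a symmetric polynomial, since permutation matrices permute the diagonal entries
(`isSymmetric_diagRestrict`).

By Newton's identities and the fundamental theorem of symmetric polynomials, every symmetric
polynomial over `ℂ` is a polynomial in `p_1, …, p_n` (`exists_psumGens_eq`). These power sums are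
moreover algebraically independent (`psumGens_injective`), because a surjective endomorphism of a
Noetherian ring is injective; so the traces are algebraically independent as well.

It remains to see that an invariant whose diagonal restriction vanishes is zero
(`eq_zero_of_diagRestrict`). It vanishes on all diagonalizable matrices, in particular wherever the
characteristic polynomial is separable, and that locus is the nonvanishing locus of a nonzero
polynomial, the resultant of the generic characteristic polynomial with its derivative (`sepPoly`).
Given an invariant `p`, choose `q` such that `p` and `traceGens n q` have the same diagonal
restriction; then `p = traceGens n q`.
-/


open MvPolynomial

namespace Stmt14

variable (n : ℕ)

/-- The generic `n×n` matrix whose entries are the coordinate functions on `gl_n`. -/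
noncomputable def genericMatrix :
    Matrix (Fin n) (Fin n) (MvPolynomial (Fin n × Fin n) ℂ) :=
  fun i j => X (i, j)

/-- The power trace `Tr(A^k)` as a polynomial function on `gl_n`. -/
noncomputable def powerTrace (k : ℕ) : MvPolynomial (Fin n × Fin n) ℂ :=
  (genericMatrix n ^ k).trace

/-- The algebra map sending the `i`-th variable to `Tr(A^{i+1})`, `i = 0, …, n−1`
(i.e. with image generated by `Tr(A), Tr(A²), …, Tr(Aⁿ)`). -/
noncomputable def traceGens :
    MvPolynomial (Fin n) ℂ →ₐ[ℂ] MvPolynomial (Fin n × Fin n) ℂ :=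
  aeval (fun i : Fin n => powerTrace n ((i : ℕ) + 1))

/-- A polynomial function on `gl_n` is invariant if its values are unchanged by
conjugation by any `g ∈ GL_n(ℂ)`. -/
def IsInvariant (p : MvPolynomial (Fin n × Fin n) ℂ) : Prop :=
  ∀ (g : GL (Fin n) ℂ) (A : Matrix (Fin n) (Fin n) ℂ),
    eval (fun q : Fin n × Fin n =>
        ((g : Matrix (Fin n) (Fin n) ℂ) * A * ((g⁻¹ : GL (Fin n) ℂ) : Matrix (Fin n) (Fin n) ℂ))
          q.1 q.2) p =
      eval (fun q : Fin n × Fin n => A q.1 q.2) p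

/-- Restriction of polynomial functions on `gl_n` to the diagonal matrices. -/
noncomputable def diagRestrict :
    MvPolynomial (Fin n × Fin n) ℂ →ₐ[ℂ] MvPolynomial (Fin n) ℂ :=
  aeval (fun q => Matrix.diagonal (fun i : Fin n => (X i : MvPolynomial (Fin n) ℂ)) q.1 q.2)

/-- The substitution of the power sums `p_1, …, p_n` for the variables. -/
noncomputable def psumGens : MvPolynomial (Fin n) ℂ →ₐ[ℂ] MvPolynomial (Fin n) ℂ :=
  aeval (fun i : Fin n => psum (Fin n) ℂ ((i : ℕ) + 1))

variable {n}

lemma eval_diagRestrict (p : MvPolynomial (Fin n × Fin n) ℂ) (x : Fin n → ℂ) :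
    eval x (diagRestrict n p) = eval (fun q => Matrix.diagonal x q.1 q.2) p := by
  have h : (aeval x).comp (diagRestrict n) =
      aeval (R := ℂ) (fun q : Fin n × Fin n => Matrix.diagonal x q.1 q.2) := by
    ext q
    by_cases hq : q.1 = q.2 <;> simp [diagRestrict, Matrix.diagonal, hq]
  simpa [aeval_eq_eval] using DFunLike.congr_fun h p

/-- Mapping the generic matrix through a ring homomorphism commutes with power traces. -/
lemma map_powerTrace {S : Type*} [CommRing S] (f : MvPolynomial (Fin n × Fin n) ℂ →+* S)
    (k : ℕ) : f (powerTrace n k) = (((genericMatrix n).map f) ^ k).trace := by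
  rw [powerTrace, AddMonoidHom.map_trace, ← Matrix.map_pow]

lemma map_eval_genericMatrix (A : Matrix (Fin n) (Fin n) ℂ) :
    (genericMatrix n).map (eval (fun q : Fin n × Fin n => A q.1 q.2)) = A := by
  ext i j
  simp [genericMatrix]

lemma eval_traceGens (q : MvPolynomial (Fin n) ℂ) (A : Matrix (Fin n) (Fin n) ℂ) :
    eval (fun q : Fin n × Fin n => A q.1 q.2) (traceGens n q) =
      eval (fun i : Fin n => (A ^ ((i : ℕ) + 1)).trace) q := by
  have h : (aeval (fun q : Fin n × Fin n => A q.1 q.2)).comp (traceGens n) =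
      aeval (R := ℂ) (fun i : Fin n => (A ^ ((i : ℕ) + 1)).trace) := by
    ext i
    have := map_powerTrace (eval (fun q : Fin n × Fin n => A q.1 q.2)) ((i : ℕ) + 1)
    rw [map_eval_genericMatrix] at this
    simpa [traceGens, aeval_eq_eval] using this
  simpa [aeval_eq_eval] using DFunLike.congr_fun h q

lemma diagRestrict_traceGens (q : MvPolynomial (Fin n) ℂ) :
    diagRestrict n (traceGens n q) = psumGens n q := by
  have h : (diagRestrict n).comp (traceGens n) = psumGens n := by
    ext1 i
    have hX : (genericMatrix n).map (diagRestrict n).toRingHom =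
        Matrix.diagonal (fun i : Fin n => (X i : MvPolynomial (Fin n) ℂ)) := by
      ext1 i j
      simp [genericMatrix, diagRestrict]
    have := map_powerTrace (diagRestrict n).toRingHom ((i : ℕ) + 1)
    rw [hX, Matrix.diagonal_pow, Matrix.trace_diagonal] at this
    simpa [traceGens, psumGens, psum] using this
  exact DFunLike.congr_fun h q

lemma isInvariant_traceGens (q : MvPolynomial (Fin n) ℂ) : IsInvariant n (traceGens n q) := by
  intro g A
  rw [eval_traceGens, eval_traceGens]
  congr 2
  ext i
  have h : ((g : Matrix (Fin n) (Fin n) ℂ) * A * ((g⁻¹ : GL (Fin n) ℂ) :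
      Matrix (Fin n) (Fin n) ℂ)) ^ ((i : ℕ) + 1) =
      g * A ^ ((i : ℕ) + 1) * ((g⁻¹ : GL (Fin n) ℂ) : Matrix (Fin n) (Fin n) ℂ) :=
    Units.conj_pow g A _
  rw [h, Matrix.trace_units_conj]

/-- Newton's identities: over `ℂ` each elementary symmetric polynomial `e_k`, `k ≤ n`, is a
polynomial in the power sums `p_1, …, p_n`. -/
lemma esymm_mem_range (k : ℕ) (hk : k ≤ n) : esymm (Fin n) ℂ k ∈ (psumGens n).range := by
  induction k using Nat.strong_induction_on with
  | _ k ih =>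
    rcases Nat.eq_zero_or_pos k with rfl | hpos
    · rw [esymm_zero]
      exact one_mem _
    have key : (k : MvPolynomial (Fin n) ℂ) * esymm (Fin n) ℂ k ∈ (psumGens n).range := by
      rw [mul_esymm_eq_sum]
      refine mul_mem (pow_mem (neg_mem (one_mem _)) _) (sum_mem fun a ha => ?_)
      rw [Finset.mem_filter, Finset.HasAntidiagonal.mem_antidiagonal] at ha
      refine mul_mem (mul_mem (pow_mem (neg_mem (one_mem _)) _)
        (ih a.1 ha.2 (by omega))) ?_
      refine ⟨X ⟨a.2 - 1, by omega⟩, ?_⟩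
      have : a.2 - 1 + 1 = a.2 := by omega
      simp [psumGens, this]
    have := Subalgebra.smul_mem _ key ((k : ℂ)⁻¹)
    have hk0 : (k : ℂ) ≠ 0 := by exact_mod_cast hpos.ne'
    have e : (k : MvPolynomial (Fin n) ℂ) = C (k : ℂ) := by simp
    rwa [e, smul_eq_C_mul, ← mul_assoc, ← C_mul, inv_mul_cancel₀ hk0, C_1, one_mul] at this

lemma exists_psumGens_eq {p : MvPolynomial (Fin n) ℂ} (hp : p.IsSymmetric) :
    ∃ q, psumGens n q = p := by
  obtain ⟨r, hr⟩ := esymmAlgHom_surjective (σ := Fin n) ℂ (n := n) (by simp) ⟨p, hp⟩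
  have hr' : aeval (fun i : Fin n => esymm (Fin n) ℂ ((i : ℕ) + 1)) r = p := by
    rw [← esymmAlgHom_apply, hr]
  have hmem : aeval (fun i : Fin n => esymm (Fin n) ℂ ((i : ℕ) + 1)) r ∈ (psumGens n).range := by
    have : (aeval (R := ℂ) (fun i : Fin n => esymm (Fin n) ℂ ((i : ℕ) + 1))).range ≤
        (psumGens n).range := by
      rw [← Algebra.adjoin_range_eq_range_aeval, Algebra.adjoin_le_iff]
      rintro _ ⟨i, rfl⟩
      exact esymm_mem_range _ i.2
    exact this ⟨r, rfl⟩
  rwa [hr'] at hmem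

/-- A surjective endomorphism `f` of a Noetherian ring is injective: the kernels of the iterates of
`f` stabilize, say at `f^m`, and an element `f^m y` of `ker f` then satisfies `f^m y = 0`. -/
lemma injective_of_surjective_ringHom {R : Type*} [CommRing R] [IsNoetherianRing R]
    (f : R →+* R) (hf : Function.Surjective f) : Function.Injective f := by
  have hmono : Monotone fun m : ℕ => RingHom.ker (f ^ m) := by
    refine monotone_nat_of_le_succ fun m x hx => ?_
    rw [RingHom.mem_ker] at hx ⊢
    rw [pow_succ', RingHom.mul_def, RingHom.comp_apply, hx, map_zero]
  obtain ⟨m, hm⟩ := monotone_stabilizes_iff_noetherian.2 ‹IsNoetherianRing R› ⟨_, hmono⟩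
  rw [injective_iff_map_eq_zero]
  intro x hx
  obtain ⟨y, rfl⟩ : ∃ y, (f ^ m) y = x := by
    rw [RingHom.coe_pow]
    exact hf.iterate m x
  have hy : y ∈ RingHom.ker (f ^ (m + 1)) := by
    rwa [RingHom.mem_ker, pow_succ', RingHom.mul_def, RingHom.comp_apply]
  have h : RingHom.ker (f ^ m) = RingHom.ker (f ^ (m + 1)) := hm (m + 1) (Nat.le_succ m)
  rwa [← h] at hy

/-- The power sums `p_1, …, p_n` are algebraically independent: under the isomorphism of the ring
of symmetric polynomials with a polynomial ring in `n` variables, `psumGens` becomes a surjective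
endomorphism of a Noetherian ring, hence it is injective. -/
lemma psumGens_injective : Function.Injective (psumGens n) := by
  let E := esymmAlgEquiv (R := ℂ) (Fin n) (n := n) (by simp)
  have hsym (q) : psumGens n q ∈ symmetricSubalgebra (Fin n) ℂ := by
    have : (psumGens n).range ≤ symmetricSubalgebra (Fin n) ℂ := by
      rw [psumGens, ← Algebra.adjoin_range_eq_range_aeval, Algebra.adjoin_le_iff]
      rintro _ ⟨i, rfl⟩
      exact psum_isSymmetric _ _ _
    exact this ⟨q, rfl⟩
  let F : MvPolynomial (Fin n) ℂ →ₐ[ℂ] MvPolynomial (Fin n) ℂ :=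
    E.symm.toAlgHom.comp ((psumGens n).codRestrict _ hsym)
  have hF : Function.Surjective F := by
    intro p
    obtain ⟨q, hq⟩ := exists_psumGens_eq (E p).2
    refine ⟨q, ?_⟩
    change E.symm ⟨psumGens n q, hsym q⟩ = p
    rw [E.symm_apply_eq]
    exact Subtype.ext hq
  have hinj : Function.Injective F :=
    injective_of_surjective_ringHom F.toRingHom hF
  intro a b hab
  apply hinj
  change E.symm ⟨psumGens n a, hsym a⟩ = E.symm ⟨psumGens n b, hsym b⟩
  congr 2

/-- The diagonal restriction of an invariant is symmetric, because permutation matrices permute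
the diagonal entries by conjugation. -/
lemma isSymmetric_diagRestrict {p : MvPolynomial (Fin n × Fin n) ℂ} (hp : IsInvariant n p) :
    (diagRestrict n p).IsSymmetric := by
  intro σ
  refine MvPolynomial.funext fun x => ?_
  rw [eval_rename, eval_diagRestrict, eval_diagRestrict]
  have hu : IsUnit (σ.permMatrix ℂ) := by
    rw [Matrix.isUnit_iff_isUnit_det, Matrix.det_permutation]
    exact (Equiv.Perm.sign σ).isUnit.map (Int.castRingHom ℂ)
  obtain ⟨g, hg⟩ := hu
  rw [← hp g (Matrix.diagonal x)]
  have : (g : Matrix (Fin n) (Fin n) ℂ) * Matrix.diagonal x =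
      Matrix.diagonal (x ∘ σ) * g := by
    rw [hg]
    ext i j
    simp only [Matrix.mul_diagonal, Matrix.diagonal_mul, Equiv.Perm.permMatrix,
      PEquiv.toMatrix_apply, Equiv.toPEquiv_apply, Option.mem_some_iff, Function.comp]
    by_cases h : σ i = j <;> simp [h]
  rw [this, mul_assoc, Units.mul_inv, mul_one]

/-- A complex matrix with separable characteristic polynomial is diagonalizable. -/
lemma exists_conj_diagonal {A : Matrix (Fin n) (Fin n) ℂ} (hA : A.charpoly.Separable) :
    ∃ (g : GL (Fin n) ℂ) (d : Fin n → ℂ),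
      A = g * Matrix.diagonal d * ((g⁻¹ : GL (Fin n) ℂ) : Matrix (Fin n) (Fin n) ℂ) := by
  classical
  have hcard : A.charpoly.roots.toFinset.card = n := by
    rw [Multiset.toFinset_card_of_nodup (Polynomial.nodup_roots hA),
      ← (IsAlgClosed.splits A.charpoly).natDegree_eq_card_roots]
    simp
  let e := (Finset.equivFinOfCardEq hcard).symm
  let d : Fin n → ℂ := fun i => (e i : ℂ)
  have hd : Function.Injective d := Subtype.val_injective.comp e.injective
  have hv (i : Fin n) : ∃ v, Module.End.HasEigenvector (Matrix.toLin' A) (d i) v := by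
    apply Module.End.HasEigenvalue.exists_hasEigenvector
    rw [Module.End.hasEigenvalue_iff_isRoot_charpoly, Matrix.charpoly_toLin']
    exact Polynomial.isRoot_of_mem_roots (Multiset.mem_toFinset.1 (e i).2)
  choose v hv using hv
  have hli := Module.End.eigenvectors_linearIndependent' (Matrix.toLin' A) d hd v hv
  let P : Matrix (Fin n) (Fin n) ℂ := (Matrix.of v).transpose
  have hP : IsUnit P := Matrix.linearIndependent_cols_iff_isUnit.1 hli
  obtain ⟨g, hg⟩ := hP
  refine ⟨g, d, ?_⟩
  have h : A * g = g * Matrix.diagonal d := by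
    rw [hg]
    ext i j
    have := congrFun (hv j).apply_eq_smul i
    rw [Matrix.mul_diagonal]
    simpa [P, Matrix.mul_apply, Matrix.mulVec, dotProduct, mul_comm] using this
  rw [← h, mul_assoc, Units.mul_inv, mul_one]

variable (n) in
/-- The resultant of the generic characteristic polynomial with its derivative, as a polynomial
function on `gl_n`. The formal degree of the derivative is taken to be `n`, which for a monic
polynomial of degree `n` does not change the value. -/
noncomputable def sepPoly : MvPolynomial (Fin n × Fin n) ℂ :=
  (genericMatrix n).charpoly.resultant (genericMatrix n).charpoly.derivative n n

lemma eval_sepPoly_ne_zero_iff (A : Matrix (Fin n) (Fin n) ℂ) :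
    eval (fun q : Fin n × Fin n => A q.1 q.2) (sepPoly n) ≠ 0 ↔ A.charpoly.Separable := by
  have hdeg : A.charpoly.natDegree = n := by simp
  have hle : A.charpoly.derivative.natDegree ≤ n :=
    (Polynomial.natDegree_derivative_le _).trans (by omega)
  have hmon := A.charpoly_monic
  have hres : A.charpoly.resultant A.charpoly.derivative n n =
      A.charpoly.resultant A.charpoly.derivative := by
    obtain ⟨k, hk⟩ := Nat.exists_eq_add_of_le hle
    have h1 : A.charpoly.coeff n = 1 := by
      simpa [hdeg] using hmon.coeff_natDegree
    have := Polynomial.resultant_add_right_deg (f := A.charpoly)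
      (g := A.charpoly.derivative) (m := n) (n := A.charpoly.derivative.natDegree) k le_rfl
    rw [← hk, h1, one_pow, one_mul] at this
    rw [this, hdeg]
  rw [sepPoly, ← Polynomial.resultant_map_map, ← Polynomial.derivative_map,
    ← Matrix.charpoly_map, map_eval_genericMatrix, hres, ← isUnit_iff_ne_zero,
    Polynomial.isUnit_resultant_iff_isCoprime hmon, Polynomial.Separable]

lemma sepPoly_ne_zero : sepPoly n ≠ 0 := by
  intro h
  have := (eval_sepPoly_ne_zero_iff (Matrix.diagonal fun i : Fin n => ((i : ℕ) : ℂ))).2 (by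
    rw [Matrix.charpoly_diagonal]
    refine Polynomial.separable_prod_X_sub_C_iff.2 fun i j hij => ?_
    exact Fin.ext (by exact_mod_cast hij))
  simp [h] at this

/-- An invariant is determined by its restriction to diagonal matrices: an invariant vanishing there
vanishes on the matrices with separable characteristic polynomial, and these are the points where
the nonzero polynomial `sepPoly n` does not vanish. -/
lemma eq_zero_of_diagRestrict {p : MvPolynomial (Fin n × Fin n) ℂ} (hp : IsInvariant n p)
    (h0 : diagRestrict n p = 0) : p = 0 := by
  refine (mul_eq_zero.1 (?_ : p * sepPoly n = 0)).resolve_right sepPoly_ne_zero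
  refine MvPolynomial.funext fun x => ?_
  rw [map_mul, map_zero]
  by_cases hs : eval x (sepPoly n) = 0
  · rw [hs, mul_zero]
  let A : Matrix (Fin n) (Fin n) ℂ := fun i j => x (i, j)
  obtain ⟨g, d, hA⟩ := exists_conj_diagonal ((eval_sepPoly_ne_zero_iff A).1 hs)
  have h := hp g (Matrix.diagonal d)
  rw [← hA, ← eval_diagRestrict, h0, map_zero] at h
  have h' : eval x p = 0 := h
  rw [h', zero_mul]

variable (n)

/-- The ring of `GL_n`-invariant polynomial functions on `gl_n` (conjugation action) is
a polynomial algebra, freely generated by the power traces `Tr(A), Tr(A²), …, Tr(Aⁿ)`: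
the map sending variables to these power traces is injective and its range is exactly
the ring of invariants. -/
theorem stmt_14 :
    Function.Injective (traceGens n) ∧
      ∀ p : MvPolynomial (Fin n × Fin n) ℂ,
        p ∈ (traceGens n).range ↔ IsInvariant n p := by
  refine ⟨fun a b hab => psumGens_injective ?_, fun p => ⟨?_, fun hp => ?_⟩⟩
  · rw [← diagRestrict_traceGens, ← diagRestrict_traceGens, hab]
  · rintro ⟨q, rfl⟩
    exact isInvariant_traceGens q
  · obtain ⟨q, hq⟩ := exists_psumGens_eq (isSymmetric_diagRestrict hp)
    refine ⟨q, (sub_eq_zero.1 (eq_zero_of_diagRestrict (p := p - traceGens n q) ?_ ?_)).symm⟩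
    · intro g A
      rw [map_sub, map_sub, hp g A, isInvariant_traceGens q g A]
    · rw [map_sub, diagRestrict_traceGens, hq, sub_self]

end Stmt14
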